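/- arXiv:1709.08658 — 6 statements merged into one kernel-verified Lean document; each statement's English description precedes it below -/
import Mathlib

section
/- Let ν ≥ 2 be an integer, t a coefficient vector of length n, and A a binary matrix with n columns whose rows are linearly independent over 𝔽₂ and form a (ν,t)-orthogonal set. Then for every subset K of the rows of A, the (ν,t)-norm of the mod-2 sum Σ_{r∈K} A_{r*} equals the sum of the (ν,t)-norms of the individual rows: ‖Σ_{r∈K} A_{r*} mod 2‖_{ν,t} ≡ Σ_{r∈K} ‖A_{r*}‖_{ν,t} (mod 2^ν). -/
open Finset

/-- The mod-2 sum (over `𝔽₂`, represented with integer entries in `{0,1}`)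
of the rows of `A` indexed by the finite set `K`. -/
def modTwoSum {ι κ : Type*} (A : ι → κ → ℤ) (K : Finset ι) : κ → ℤ :=
  fun c => (∑ r ∈ K, A r c) % 2

/-- Two binary vectors `v, w` are `(ν,t)`-orthogonal: `Σᵢ vᵢ wᵢ tᵢ ≡ 0 (mod 2^{ν−1})`. -/
def NuOrthoVec (ν : ℕ) {κ : Type*} [Fintype κ] (t v w : κ → ℤ) : Prop :=
  (2 ^ (ν - 1) : ℤ) ∣ ∑ i, v i * w i * t i

/-- The family of rows of `A` is a `(ν,t)`-orthogonal set: any two disjoint subsets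
of the rows span `(ν,t)`-orthogonal `𝔽₂`-subspaces; equivalently, the mod-2 sums of
any two disjoint subsets of rows are `(ν,t)`-orthogonal vectors. -/
def NuOrthoRows (ν : ℕ) {ι κ : Type*} [Fintype κ] (t : κ → ℤ) (A : ι → κ → ℤ) : Prop :=
  ∀ K K' : Finset ι, Disjoint K K' → NuOrthoVec ν t (modTwoSum A K) (modTwoSum A K')

/-- The rows of the integer `{0,1}`-matrix `A`, reduced modulo 2, are linearly
independent over `𝔽₂`. -/
def RowsLinIndepF2 {ι κ : Type*} (A : ι → κ → ℤ) : Prop :=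
  LinearIndependent (ZMod 2) (fun r : ι => fun c : κ => ((A r c : ℤ) : ZMod 2))

/-!
For binary `v` and `w` the mod-2 sum is `v + w - 2 v w` over `ℤ`, so its `(ν,t)`-norm is
`‖v‖ + ‖w‖ - 2 ∑ vᵢ wᵢ tᵢ`. Orthogonality says that `2 ^ (ν - 1)` divides the last sum, and the
factor `2` turns this into additivity of the norm modulo `2 ^ ν`.
-/

theorem add_emod_two_eq_add_sub (a b : ℤ) :
    (a + b) % 2 = a % 2 + b % 2 - 2 * (a % 2 * (b % 2)) := by
  rcases Int.emod_two_eq_zero_or_one a with ha | ha <;>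
    rcases Int.emod_two_eq_zero_or_one b with hb | hb <;>
    simp [Int.add_emod, ha, hb]

section ModTwoSum

variable {ι κ : Type*} {A : ι → κ → ℤ}

theorem modTwoSum_empty : modTwoSum A ∅ = 0 := by
  ext c
  simp [modTwoSum]

theorem modTwoSum_singleton_of_binary {r : ι} (hr : ∀ c, A r c = 0 ∨ A r c = 1) :
    modTwoSum A {r} = A r := by
  ext c
  rcases hr c with h | h <;> simp [modTwoSum, h]

theorem modTwoSum_disjUnion {K L : Finset ι} (hKL : Disjoint K L) :
    modTwoSum A (K.disjUnion L hKL) =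
      modTwoSum A K + modTwoSum A L - (2 : ℤ) • (modTwoSum A K * modTwoSum A L) := by
  ext c
  simp [modTwoSum, sum_disjUnion, add_emod_two_eq_add_sub (∑ r ∈ K, A r c)]

variable [Fintype κ] {ν : ℕ} {t : κ → ℤ}

theorem NuOrthoVec.two_mul_dotProduct_modEq_zero {v w : κ → ℤ} (hν : 1 ≤ ν)
    (hvw : NuOrthoVec ν t v w) : 2 * ((v * w) ⬝ᵥ t) ≡ 0 [ZMOD 2 ^ ν] := by
  rw [Int.modEq_zero_iff_dvd, ← mul_pow_sub_one (by lia : ν ≠ 0)]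
  exact mul_dvd_mul_left 2 hvw

theorem NuOrthoVec.modTwoSum_disjUnion_dotProduct_modEq {K L : Finset ι} (hν : 1 ≤ ν)
    (hKL : Disjoint K L) (horth : NuOrthoVec ν t (modTwoSum A K) (modTwoSum A L)) :
    modTwoSum A (K.disjUnion L hKL) ⬝ᵥ t ≡
      modTwoSum A K ⬝ᵥ t + modTwoSum A L ⬝ᵥ t [ZMOD 2 ^ ν] := by
  rw [modTwoSum_disjUnion, sub_dotProduct, add_dotProduct, smul_dotProduct, smul_eq_mul]
  simpa only [sub_zero] using (Int.ModEq.refl _).sub (horth.two_mul_dotProduct_modEq_zero hν)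

theorem NuOrthoRows.modTwoSum_dotProduct_modEq_sum (hν : 1 ≤ ν) (horth : NuOrthoRows ν t A)
    (K : Finset ι) :
    modTwoSum A K ⬝ᵥ t ≡ ∑ r ∈ K, modTwoSum A {r} ⬝ᵥ t [ZMOD 2 ^ ν] := by
  induction K using Finset.cons_induction with
  | empty => simp [modTwoSum_empty, Int.ModEq.refl]
  | cons a K ha ih =>
    have hdisj : Disjoint {a} K := disjoint_singleton_left.mpr ha
    rw [sum_cons, ← singleton_disjUnion _ _ hdisj]
    exact ((horth {a} K hdisj).modTwoSum_disjUnion_dotProduct_modEq hν hdisj).trans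
      (ih.add_left _)

end ModTwoSum

theorem stmt_2_general {ι κ : Type*} [Fintype κ] {ν : ℕ} (hν : 1 ≤ ν) {t : κ → ℤ}
    {A : ι → κ → ℤ} (hA01 : ∀ r i, A r i = 0 ∨ A r i = 1) (horth : NuOrthoRows ν t A)
    (K : Finset ι) :
    (∑ i, modTwoSum A K i * t i) ≡ (∑ r ∈ K, ∑ i, A r i * t i) [ZMOD (2 ^ ν)] := by
  simpa only [modTwoSum_singleton_of_binary (hA01 _), dotProduct] using
    horth.modTwoSum_dotProduct_modEq_sum hν K

/-- Lemma on `(ν,t)`-orthogonality, (i) ⇒ (ii): if the rows of a binary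
matrix `A` are `𝔽₂`-linearly independent and form a `(ν,t)`-orthogonal set, then for
every subset `K` of the rows, the `(ν,t)`-norm of the mod-2 sum of the rows in `K`
equals the sum of the individual `(ν,t)`-norms, modulo `2^ν`. -/
theorem stmt_2 (ν n m : ℕ) (hν : 2 ≤ ν)
    (t : Fin n → ℤ) (ht : ∀ i, Odd (t i))
    (A : Fin m → Fin n → ℤ) (hA01 : ∀ r i, A r i = 0 ∨ A r i = 1)
    (hind : RowsLinIndepF2 A)
    (horth : NuOrthoRows ν t A) :
    ∀ K : Finset (Fin m),
      (∑ i, modTwoSum A K i * t i) ≡ (∑ r ∈ K, ∑ i, A r i * t i) [ZMOD (2 ^ ν)] := by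
  exact stmt_2_general (by lia) hA01 horth
end

section
/- Let ν ≥ 2 be an integer, t a coefficient vector of length n, and A a binary matrix with n columns whose rows are linearly independent over 𝔽₂. Suppose that for every subset K of the rows of A one has ‖Σ_{r∈K} A_{r*} mod 2‖_{ν,t} ≡ Σ_{r∈K} ‖A_{r*}‖_{ν,t} (mod 2^ν). Then for every subset 𝔞 of the rows of A with 2 ≤ |𝔞| ≤ ν, one has 2^{|𝔞|−1} Σᵢ (∏_{a∈𝔞} A_{ai}) tᵢ ≡ 0 (mod 2^ν). -/
/-!
For binary `x` the sign `1 - 2 * ((∑ r ∈ K, x r) % 2)` is multiplicative: it equals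
`∏ r ∈ K, (1 - 2 * x r)`. Expanding `∏ r ∈ a, (1 - (1 - 2 * x r)) = 2 ^ #a * ∏ r ∈ a, x r` therefore
writes `2 ^ (#a - 1) * ∏ r ∈ a, x r` as an alternating sum, over the subsets `K` of `a`, of the
parities of `∑ r ∈ K, x r`. Weighting by `t` turns these parities into the norms of the mod-2 row
sums. By hypothesis these norms are additive in `K` modulo `2 ^ ν`, and the alternating sum of an
additive function over the subsets of a set with at least two elements vanishes.
-/

open Finset

lemma sum_powerset_neg_one_pow_card_smul_sum_eq_zero {ι M : Type*} [AddCommGroup M]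
    {a : Finset ι} (ha : a.Nontrivial) (w : ι → M) :
    ∑ K ∈ a.powerset, (-1 : ℤ) ^ #K • ∑ r ∈ K, w r = 0 := by
  classical
  obtain ⟨b, hb⟩ := ha.nonempty
  have hne : (a.erase b).Nonempty := ha.erase_nonempty
  have hpair : ∀ K ∈ (a.erase b).powerset,
      (-1 : ℤ) ^ #(insert b K) • ∑ r ∈ insert b K, w r =
        -((-1 : ℤ) ^ #K • ∑ r ∈ K, w r) - (-1 : ℤ) ^ #K • w b := by
    intro K hK
    have hbK : b ∉ K := fun h => notMem_erase b a (mem_powerset.1 hK h)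
    rw [card_insert_of_notMem hbK, sum_insert hbK, pow_succ]
    module
  rw [← insert_erase hb, sum_powerset_insert (notMem_erase b a), sum_congr rfl hpair,
    sum_sub_distrib, sum_neg_distrib, ← sum_smul,
    sum_powerset_neg_one_pow_card_of_nonempty hne, zero_smul, sub_zero, add_neg_cancel]

section Binary

variable {ι : Type*} {a : Finset ι} {x : ι → ℤ}

lemma prod_one_sub_two_mul_eq_one_sub_two_mul_sum_emod_two
    (hx : ∀ r ∈ a, x r = 0 ∨ x r = 1) :
    ∏ r ∈ a, (1 - 2 * x r) = 1 - 2 * ((∑ r ∈ a, x r) % 2) := by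
  induction a using Finset.cons_induction with
  | empty => simp
  | cons r K hr ih =>
    rw [forall_mem_cons] at hx
    rw [prod_cons, sum_cons, ih hx.2]
    rcases hx.1 with h | h <;> rw [h] <;> omega

lemma two_pow_card_sub_one_mul_prod_eq (ha : a.Nonempty)
    (hx : ∀ r ∈ a, x r = 0 ∨ x r = 1) :
    2 ^ (#a - 1) * ∏ r ∈ a, x r = -∑ K ∈ a.powerset, (-1) ^ #K * ((∑ r ∈ K, x r) % 2) := by
  classical
  refine mul_left_cancel₀ (two_ne_zero (α := ℤ)) ?_
  calc 2 * (2 ^ (#a - 1) * ∏ r ∈ a, x r)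
      = ∏ r ∈ a, (1 - (1 - 2 * x r)) := by
        simp only [sub_sub_cancel, prod_mul_distrib, prod_const]
        rw [← mul_assoc, mul_pow_sub_one ha.card_ne_zero]
    _ = ∑ K ∈ a.powerset, (-1) ^ #K * ∏ r ∈ K, (1 - 2 * x r) := by
        simp only [prod_sub, prod_const_one, mul_one]
    _ = ∑ K ∈ a.powerset, ((-1) ^ #K - 2 * ((-1) ^ #K * ((∑ r ∈ K, x r) % 2))) := by
        refine sum_congr rfl fun K hK => ?_
        rw [prod_one_sub_two_mul_eq_one_sub_two_mul_sum_emod_two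
          fun r hr => hx r (mem_powerset.1 hK hr)]
        ring
    _ = 2 * -∑ K ∈ a.powerset, (-1) ^ #K * ((∑ r ∈ K, x r) % 2) := by
        rw [sum_sub_distrib, ← mul_sum, sum_powerset_neg_one_pow_card_of_nonempty ha]
        ring

end Binary

section Rows

variable {ι κ : Type*} [Fintype κ] {A : ι → κ → ℤ} {a : Finset ι}

lemma two_pow_card_sub_one_mul_sum_prod_eq (t : κ → ℤ) (ha : a.Nonempty)
    (hA : ∀ r ∈ a, ∀ i, A r i = 0 ∨ A r i = 1) :
    2 ^ (#a - 1) * ∑ i, (∏ r ∈ a, A r i) * t i =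
      -∑ K ∈ a.powerset, (-1) ^ #K * ∑ i, modTwoSum A K i * t i := by
  simp only [mul_sum, ← mul_assoc]
  rw [sum_comm, ← sum_neg_distrib]
  refine sum_congr rfl fun i _ => ?_
  rw [two_pow_card_sub_one_mul_prod_eq ha fun r hr => hA r hr i, neg_mul, sum_mul]
  rfl

theorem stmt_3_general {N : ℤ} {t : κ → ℤ} (ha : a.Nontrivial)
    (hA : ∀ r ∈ a, ∀ i, A r i = 0 ∨ A r i = 1)
    (hsum : ∀ K ⊆ a, ∑ i, modTwoSum A K i * t i ≡ ∑ r ∈ K, ∑ i, A r i * t i [ZMOD N]) :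
    N ∣ 2 ^ (#a - 1) * ∑ i, (∏ r ∈ a, A r i) * t i := by
  have halt : ∑ K ∈ a.powerset, (-1) ^ #K * ∑ i, modTwoSum A K i * t i ≡ 0 [ZMOD N] :=
    calc
      _ ≡ ∑ K ∈ a.powerset, (-1) ^ #K * ∑ r ∈ K, ∑ i, A r i * t i [ZMOD N] :=
        Int.ModEq.sum fun K hK => (hsum K (mem_powerset.1 hK)).mul_left _
      _ = 0 := sum_powerset_neg_one_pow_card_smul_sum_eq_zero ha fun r => ∑ i, A r i * t i
  rw [two_pow_card_sub_one_mul_sum_prod_eq t ha.nonempty hA, dvd_neg]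
  exact Int.modEq_zero_iff_dvd.1 halt

end Rows

/-- Lemma on `(ν,t)`-orthogonality, (ii) ⇒ (iii): if for every subset `K`
of the `𝔽₂`-linearly independent rows of a binary matrix `A` the `(ν,t)`-norm of the
mod-2 sum of the rows in `K` equals the sum of the individual `(ν,t)`-norms modulo
`2^ν`, then for every subset `𝔞` of the rows with `2 ≤ |𝔞| ≤ ν` one has
`2^{|𝔞|−1} Σᵢ (∏_{a∈𝔞} A_{ai}) tᵢ ≡ 0 (mod 2^ν)`. -/
theorem stmt_3 (ν n m : ℕ) (hν : 2 ≤ ν)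
    (t : Fin n → ℤ) (ht : ∀ i, Odd (t i))
    (A : Fin m → Fin n → ℤ) (hA01 : ∀ r i, A r i = 0 ∨ A r i = 1)
    (hind : RowsLinIndepF2 A)
    (hsum : ∀ K : Finset (Fin m),
      (∑ i, modTwoSum A K i * t i) ≡ (∑ r ∈ K, ∑ i, A r i * t i) [ZMOD (2 ^ ν)]) :
    ∀ a : Finset (Fin m), 2 ≤ a.card → a.card ≤ ν →
      (2 ^ ν : ℤ) ∣ 2 ^ (a.card - 1) * ∑ i, (∏ r ∈ a, A r i) * t i := by
  intro a ha _
  exact stmt_3_general (one_lt_card_iff_nontrivial.1 ha) (fun r _ => hA01 r) fun K _ => hsum K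
end

section
/- Let ν ≥ 2 be an integer, t a coefficient vector of length n, and A a binary matrix with n columns whose rows are linearly independent over 𝔽₂. Suppose that for every subset 𝔞 of the rows of A with 2 ≤ |𝔞| ≤ ν one has 2^{|𝔞|−1} Σᵢ (∏_{a∈𝔞} A_{ai}) tᵢ ≡ 0 (mod 2^ν). Then the rows of A form a (ν,t)-orthogonal set: for any two disjoint subsets K, K′ of rows, the vectors v = Σ_{r∈K} A_{r*} mod 2 and w = Σ_{r∈K′} A_{r*} mod 2 satisfy Σᵢ vᵢ wᵢ tᵢ ≡ 0 (mod 2^{ν−1}). -/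
open Finset

/-! Since `∏ r ∈ K, (1 - 2 * A r i)` is the sign `(-1) ^ ∑ r ∈ K, A r i`, expanding it over subsets
of `K` writes twice a mod-2 sum of rows as an integer combination of entrywise products of rows,
where a product of `s` rows has coefficient `± 2 ^ s`. Multiplying two such expansions for
disjoint `K` and `K'` gives `4 * ∑ i, v i * w i * t i` as a combination of the sums
`∑ i, (∏ r ∈ a, A r i) * t i` with coefficients `± 2 ^ #a` and `2 ≤ #a`. Each term is divisible by
`2 ^ (ν + 1)`: by hypothesis if `#a ≤ ν`, and because of its coefficient otherwise. -/

theorem prod_one_add_mul_eq_one_add_sum_nonempty {ι R : Type*} [CommSemiring R] (c : R)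
    (f : ι → R) (K : Finset ι) :
    ∏ r ∈ K, (1 + c * f r) = 1 + ∑ S ∈ K.powerset with S.Nonempty, c ^ #S * ∏ r ∈ S, f r := by
  classical
  have nonempty_subsets : {S ∈ K.powerset | S.Nonempty} = K.powerset.erase ∅ := by
    ext S
    simp [nonempty_iff_ne_empty, and_comm]
  simp only [prod_one_add, prod_mul_distrib, prod_const]
  rw [nonempty_subsets, ← add_sum_erase _ _ (empty_mem_powerset K), card_empty, prod_empty,
    pow_zero, mul_one]

theorem prod_one_sub_two_mul_eq_one_sub_two_mul_sum_emod {ι : Type*} {f : ι → ℤ}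
    {K : Finset ι} (hf : ∀ r ∈ K, f r = 0 ∨ f r = 1) :
    ∏ r ∈ K, (1 - 2 * f r) = 1 - 2 * ((∑ r ∈ K, f r) % 2) := by
  classical
  induction K using Finset.induction_on with
  | empty => simp
  | insert a K ha ih =>
    rw [forall_mem_insert] at hf
    rw [prod_insert ha, sum_insert ha, ih hf.2]
    rcases hf.1 with h | h <;> rw [h] <;> omega

section ModTwoSum

variable {ι κ : Type*} {A : ι → κ → ℤ}

theorem two_mul_modTwoSum_eq_neg_sum {K : Finset ι} {i : κ}
    (hA : ∀ r ∈ K, A r i = 0 ∨ A r i = 1) :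
    2 * modTwoSum A K i = -∑ S ∈ K.powerset with S.Nonempty, (-2) ^ #S * ∏ r ∈ S, A r i := by
  have sign_eq := prod_one_sub_two_mul_eq_one_sub_two_mul_sum_emod hA
  simp only [sub_eq_add_neg 1 (2 * A _ i), ← neg_mul,
    prod_one_add_mul_eq_one_add_sum_nonempty] at sign_eq
  unfold modTwoSum
  linarith

variable [DecidableEq ι]

theorem four_mul_modTwoSum_mul_modTwoSum {K K' : Finset ι} (hK : Disjoint K K') {i : κ}
    (hA : ∀ r, A r i = 0 ∨ A r i = 1) :
    4 * (modTwoSum A K i * modTwoSum A K' i) =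
      ∑ S ∈ K.powerset with S.Nonempty, ∑ S' ∈ K'.powerset with S'.Nonempty,
        (-2) ^ #(S ∪ S') * ∏ r ∈ S ∪ S', A r i := by
  calc 4 * (modTwoSum A K i * modTwoSum A K' i)
      = (2 * modTwoSum A K i) * (2 * modTwoSum A K' i) := by ring
    _ = ∑ S ∈ K.powerset with S.Nonempty, ∑ S' ∈ K'.powerset with S'.Nonempty,
          ((-2) ^ #S * ∏ r ∈ S, A r i) * ((-2) ^ #S' * ∏ r ∈ S', A r i) := by
      rw [two_mul_modTwoSum_eq_neg_sum fun r _ => hA r,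
        two_mul_modTwoSum_eq_neg_sum fun r _ => hA r, neg_mul_neg, sum_mul_sum]
    _ = _ := by
      refine sum_congr rfl fun S hS => sum_congr rfl fun S' hS' => ?_
      simp only [mem_filter, mem_powerset] at hS hS'
      have disjoint_subsets : Disjoint S S' := hK.mono hS.1 hS'.1
      rw [card_union_of_disjoint disjoint_subsets, prod_union disjoint_subsets, pow_add,
        mul_mul_mul_comm]

theorem four_mul_sum_modTwoSum_mul_modTwoSum [Fintype κ] {K K' : Finset ι} (hK : Disjoint K K')
    (hA : ∀ r i, A r i = 0 ∨ A r i = 1) (t : κ → ℤ) :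
    4 * ∑ i, modTwoSum A K i * modTwoSum A K' i * t i =
      ∑ S ∈ K.powerset with S.Nonempty, ∑ S' ∈ K'.powerset with S'.Nonempty,
        (-2) ^ #(S ∪ S') * ∑ i, (∏ r ∈ S ∪ S', A r i) * t i := by
  calc 4 * ∑ i, modTwoSum A K i * modTwoSum A K' i * t i
      = ∑ i, ∑ S ∈ K.powerset with S.Nonempty, ∑ S' ∈ K'.powerset with S'.Nonempty,
          (-2) ^ #(S ∪ S') * ((∏ r ∈ S ∪ S', A r i) * t i) := by
          rw [mul_sum]
          refine sum_congr rfl fun i _ => ?_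
          rw [← mul_assoc, four_mul_modTwoSum_mul_modTwoSum hK fun r => hA r i]
          simp only [sum_mul, mul_assoc]
    _ = _ := by
      simp only [mul_sum]
      rw [sum_comm]
      exact sum_congr rfl fun S _ => sum_comm

end ModTwoSum

theorem pow_succ_dvd_pow_succ_mul {M : Type*} [Monoid M] {p x : M} {k ν : ℕ}
    (h : k < ν → p ^ ν ∣ p ^ k * x) : p ^ (ν + 1) ∣ p ^ (k + 1) * x := by
  rcases lt_or_ge k ν with hk | hk
  · rw [pow_succ', pow_succ', mul_assoc]
    exact mul_dvd_mul_left p (h hk)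
  · exact (pow_dvd_pow p (Nat.succ_le_succ hk)).mul_right x

theorem stmt_4_general {ι κ : Type*} [Fintype κ] {ν : ℕ} (hν : 1 ≤ ν) {t : κ → ℤ} {A : ι → κ → ℤ}
    (hA : ∀ r i, A r i = 0 ∨ A r i = 1)
    (hdiv : ∀ a : Finset ι, 2 ≤ #a → #a ≤ ν →
      (2 ^ ν : ℤ) ∣ 2 ^ (#a - 1) * ∑ i, (∏ r ∈ a, A r i) * t i) :
    NuOrthoRows ν t A := by
  classical
  intro K K' hK
  have term_dvd (a : Finset ι) (ha : 2 ≤ #a) :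
      (2 ^ (ν + 1) : ℤ) ∣ (-2) ^ #a * ∑ i, (∏ r ∈ a, A r i) * t i := by
    rw [neg_pow, mul_assoc, ← Nat.sub_add_cancel (one_le_two.trans ha)]
    exact (pow_succ_dvd_pow_succ_mul fun h => hdiv a ha (by omega)).mul_left _
  have four_mul_dvd : (4 * 2 ^ (ν - 1) : ℤ) ∣
      4 * ∑ i, modTwoSum A K i * modTwoSum A K' i * t i := by
    have four_mul_two_pow : (4 * 2 ^ (ν - 1) : ℤ) = 2 ^ (ν + 1) := by
      rw [show ν + 1 = 2 + (ν - 1) by omega, pow_add]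
      norm_num
    rw [four_mul_two_pow, four_mul_sum_modTwoSum_mul_modTwoSum hK hA]
    refine dvd_sum fun S hS => dvd_sum fun S' hS' => term_dvd (S ∪ S') ?_
    simp only [mem_filter, mem_powerset] at hS hS'
    rw [card_union_of_disjoint (hK.mono hS.1 hS'.1)]
    exact Nat.add_le_add hS.2.card_pos hS'.2.card_pos
  exact (mul_dvd_mul_iff_left four_ne_zero).1 four_mul_dvd

/-- Lemma on `(ν,t)`-orthogonality, (iii) ⇒ (i): if for every subset `𝔞`
of the `𝔽₂`-linearly independent rows of a binary matrix `A` with `2 ≤ |𝔞| ≤ ν` one has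
`2^{|𝔞|−1} Σᵢ (∏_{a∈𝔞} A_{ai}) tᵢ ≡ 0 (mod 2^ν)`, then the rows of `A` form a
`(ν,t)`-orthogonal set: for any two disjoint subsets `K, K′` of rows, the mod-2 sums
`v = Σ_{r∈K} A_{r*}` and `w = Σ_{r∈K′} A_{r*}` satisfy `Σᵢ vᵢ wᵢ tᵢ ≡ 0 (mod 2^{ν−1})`. -/
theorem stmt_4 (ν n m : ℕ) (hν : 2 ≤ ν)
    (t : Fin n → ℤ) (ht : ∀ i, Odd (t i))
    (A : Fin m → Fin n → ℤ) (hA01 : ∀ r i, A r i = 0 ∨ A r i = 1)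
    (hind : RowsLinIndepF2 A)
    (hdiv : ∀ a : Finset (Fin m), 2 ≤ a.card → a.card ≤ ν →
      (2 ^ ν : ℤ) ∣ 2 ^ (a.card - 1) * ∑ i, (∏ r ∈ a, A r i) * t i) :
    ∀ K K' : Finset (Fin m), Disjoint K K' →
      (2 ^ (ν - 1) : ℤ) ∣ ∑ i, modTwoSum A K i * modTwoSum A K' i * t i :=
  stmt_4_general (one_le_two.trans hν) hA01 hdiv
end

section
/- Let S be an r×n binary matrix and L a k×n binary matrix such that the rows of the stacked matrix G = [L; S] are linearly independent over 𝔽₂, and over 𝔽₂ one has S Sᵀ = 0, S Lᵀ = 0, and L Lᵀ = I. Then there exists a coefficient vector t ∈ ℤ^n (all entries odd) such that Σᵢ S_{ai} tᵢ ≡ 0 (mod 4) for every row a of S and Σᵢ L_{bi} tᵢ ≡ 1 (mod 4) for every row b of L; consequently the rows of G form a (2,t)-orthogonal set, the rows of L are (2,t)-orthonormal, and the rows of S are (2,t)-null. -/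
/-!
Let `c j ∈ {0, 1}` be the parity of `⟨A j, A j⟩`, and write `t = 1 + 2x`. The condition
`⟨A j, t⟩ ≡ c j (mod 4)` becomes the `𝔽₂`-linear system `⟨A j, x⟩ = (c j - ⟨A j, 1⟩) / 2`, which is
solvable iff its right-hand side respects every relation among the rows mod 2. Let
`∑ j ∈ K, A j = 2u` be such a relation. The squared length of the left-hand side is divisible by
`4`, and the off-diagonal terms of its expansion come in equal pairs of even numbers, so
`∑ j ∈ K, ⟨A j, A j⟩ ≡ 0 (mod 4)`; for binary rows this is the sum of the weights. Pairing the
relation with one of its own rows shows that only rows of even weight occur in it, and these have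
`c j = 0`.
-/

open Finset

open scoped Matrix in
theorem exists_mulVec_eq_of_forall_vecMul_eq_zero {F m n : Type*} [Field F] [Fintype m]
    [Fintype n] (M : Matrix m n F) (b : m → F) (h : ∀ y, y ᵥ* M = 0 → y ⬝ᵥ b = 0) :
    ∃ x, M *ᵥ x = b := by
  classical
  by_contra hb
  have hb' : b ∉ LinearMap.range M.mulVecLin := hb
  obtain ⟨f, hfb, hf⟩ := Submodule.exists_le_ker_of_notMem hb'
  obtain ⟨y, rfl⟩ := (dotProductEquiv F m).surjective f
  refine hfb (h y (dotProduct_eq_zero _ fun x ↦ ?_))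
  rw [← Matrix.dotProduct_mulVec]
  exact hf ⟨x, rfl⟩

section

variable {ι κ : Type*} [Fintype κ] {A : ι → κ → ℤ}

lemma exists_dotProduct_modEq_two [Finite ι] (d : ι → ℤ)
    (hd : ∀ (K : Finset ι) (u : κ → ℤ), ∑ j ∈ K, A j = 2 • u → 2 ∣ ∑ j ∈ K, d j) :
    ∃ x : κ → ℤ, ∀ j, A j ⬝ᵥ x ≡ d j [ZMOD 2] := by
  classical
  have := Fintype.ofFinite ι
  let M : Matrix ι κ (ZMod 2) := Matrix.of fun j i ↦ (A j i : ZMod 2)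
  have sum_mul_eq (y : ι → ZMod 2) (f : ι → ℤ) :
      ∑ j, y j * (f j : ZMod 2) = ((∑ j with y j = 1, f j : ℤ) : ZMod 2) := by
    rw [Int.cast_sum, sum_filter]
    refine sum_congr rfl fun j _ ↦ ?_
    obtain h | h : y j = 0 ∨ y j = 1 := by generalize y j = a; decide +revert
    all_goals simp [h]
  obtain ⟨x, hx⟩ := exists_mulVec_eq_of_forall_vecMul_eq_zero M (fun j ↦ (d j : ZMod 2)) <| by
    intro y hy
    have hcol (i : κ) : (2 : ℤ) ∣ ∑ j with y j = 1, A j i :=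
      (ZMod.intCast_zmod_eq_zero_iff_dvd _ 2).1 <| (sum_mul_eq y (A · i)).symm.trans (congrFun hy i)
    choose u hu using hcol
    refine (sum_mul_eq y d).trans <| (ZMod.intCast_zmod_eq_zero_iff_dvd _ 2).2 <| hd _ u ?_
    ext i
    simp [hu]
  refine ⟨fun i ↦ (x i).val, fun j ↦ (ZMod.intCast_eq_intCast_iff _ _ 2).1 ?_⟩
  simpa [dotProduct, Matrix.mulVec, M] using congrFun hx j

theorem exists_odd_dotProduct_modEq_four [Finite ι] (c : ι → ℤ)
    (hc : ∀ j, ∑ i, A j i ≡ c j [ZMOD 2])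
    (hrel : ∀ (K : Finset ι) (u : κ → ℤ), ∑ j ∈ K, A j = 2 • u →
      ∑ j ∈ K, ∑ i, A j i ≡ ∑ j ∈ K, c j [ZMOD 4]) :
    ∃ t : κ → ℤ, (∀ i, Odd (t i)) ∧ ∀ j, A j ⬝ᵥ t ≡ c j [ZMOD 4] := by
  choose d hd using fun j ↦ (hc j).dvd
  obtain ⟨x, hx⟩ := exists_dotProduct_modEq_two (A := A) d fun K u hu ↦ by
    have hsum : 4 ∣ 2 * ∑ j ∈ K, d j := by
      simpa only [mul_sum, ← hd, sum_sub_distrib] using (hrel K u hu).dvd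
    lia
  refine ⟨1 + 2 • x, fun i ↦ ⟨x i, by simp [add_comm]⟩, fun j ↦ ?_⟩
  have hexpand : A j ⬝ᵥ (1 + 2 • x) = ∑ i, A j i + 2 * (A j ⬝ᵥ x) := by
    rw [dotProduct_add, dotProduct_one, dotProduct_smul, nsmul_eq_mul, Nat.cast_ofNat]
  have hxj := (hx j).dvd
  have hdj := hd j
  rw [hexpand, Int.modEq_iff_dvd]
  lia

section PairwiseOrthogonal

variable (hA : Pairwise fun j j' ↦ 2 ∣ A j ⬝ᵥ A j')
include hA

lemma two_dvd_dotProduct_sum_of_notMem {K : Finset ι} {j : ι} (hj : j ∉ K) :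
    2 ∣ A j ⬝ᵥ ∑ j' ∈ K, A j' := by
  rw [dotProduct_sum]
  exact dvd_sum fun j' hj' ↦ hA (ne_of_mem_of_not_mem hj' hj).symm

lemma two_dvd_sum_dotProduct_sum_of_disjoint {K K' : Finset ι} (hK : Disjoint K K') :
    2 ∣ (∑ j ∈ K, A j) ⬝ᵥ ∑ j ∈ K', A j := by
  rw [sum_dotProduct]
  exact dvd_sum fun j hj ↦ two_dvd_dotProduct_sum_of_notMem hA (disjoint_left.1 hK hj)

lemma sum_dotProduct_sum_modEq_four (K : Finset ι) :
    (∑ j ∈ K, A j) ⬝ᵥ ∑ j ∈ K, A j ≡ ∑ j ∈ K, A j ⬝ᵥ A j [ZMOD 4] := by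
  classical
  induction K using Finset.induction_on with
  | empty => simp
  | insert a K ha ih =>
    have hcross := two_dvd_dotProduct_sum_of_notMem hA ha
    simp only [sum_insert ha, add_dotProduct, dotProduct_add, dotProduct_comm (∑ j ∈ K, A j) (A a)]
    rw [Int.modEq_iff_dvd] at ih ⊢
    lia

lemma four_dvd_sum_dotProduct_self_of_sum_eq_two_smul {K : Finset ι} {u : κ → ℤ}
    (hu : ∑ j ∈ K, A j = 2 • u) : 4 ∣ ∑ j ∈ K, A j ⬝ᵥ A j := by
  refine (sum_dotProduct_sum_modEq_four hA K).dvd_iff.1 ⟨u ⬝ᵥ u, ?_⟩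
  rw [hu, smul_dotProduct, dotProduct_smul, nsmul_eq_mul, nsmul_eq_mul]
  ring

lemma two_dvd_dotProduct_self_of_sum_eq_two_smul {K : Finset ι} {u : κ → ℤ}
    (hu : ∑ j ∈ K, A j = 2 • u) {j : ι} (hj : j ∈ K) : 2 ∣ A j ⬝ᵥ A j := by
  classical
  have hsplit : A j ⬝ᵥ A j + A j ⬝ᵥ ∑ j' ∈ K.erase j, A j' = 2 * (A j ⬝ᵥ u) := by
    rw [← dotProduct_add, add_sum_erase K A hj, hu, dotProduct_smul, nsmul_eq_mul, Nat.cast_ofNat]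
  have hrest := two_dvd_dotProduct_sum_of_notMem hA (notMem_erase j K)
  lia

theorem nuOrthoRows_two_of_odd {t : κ → ℤ} (ht : ∀ i, Odd (t i)) : NuOrthoRows 2 t A := by
  intro K K' hK
  have hmod : ∑ i, modTwoSum A K i * modTwoSum A K' i * t i ≡
      (∑ j ∈ K, A j) ⬝ᵥ ∑ j ∈ K', A j [ZMOD 2] := by
    refine Int.ModEq.sum fun i _ ↦ ?_
    have hti : t i ≡ 1 [ZMOD 2] := Int.odd_iff.1 (ht i)
    simpa only [modTwoSum, Finset.sum_apply, mul_one] using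
      ((Int.mod_modEq _ 2).mul (Int.mod_modEq _ 2)).mul hti
  exact hmod.dvd_iff.2 (two_dvd_sum_dotProduct_sum_of_disjoint hA hK)

theorem exists_odd_dotProduct_modEq_emod_two [Finite ι] (h01 : ∀ j i, A j i = 0 ∨ A j i = 1) :
    ∃ t : κ → ℤ, (∀ i, Odd (t i)) ∧ ∀ j, A j ⬝ᵥ t ≡ (A j ⬝ᵥ A j) % 2 [ZMOD 4] := by
  have hweight (j : ι) : ∑ i, A j i = A j ⬝ᵥ A j :=
    sum_congr rfl fun i _ ↦ by obtain h | h := h01 j i <;> simp [h]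
  refine exists_odd_dotProduct_modEq_four _ (fun j ↦ ?_) fun K u hu ↦ ?_
  · rw [hweight]
    exact (Int.mod_modEq _ 2).symm
  · rw [sum_congr rfl fun j _ ↦ hweight j,
      sum_eq_zero fun j hj ↦
        Int.emod_eq_zero_of_dvd (two_dvd_dotProduct_self_of_sum_eq_two_smul hA hu hj)]
    exact Int.modEq_zero_iff_dvd.2 (four_dvd_sum_dotProduct_self_of_sum_eq_two_smul hA hu)

end PairwiseOrthogonal

end

lemma pairwise_two_dvd_sumElim_dotProduct {ι ι' κ : Type*} [Fintype κ]
    {L : ι → κ → ℤ} {S : ι' → κ → ℤ}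
    (hL : Pairwise fun b b' ↦ 2 ∣ L b ⬝ᵥ L b') (hS : Pairwise fun a a' ↦ 2 ∣ S a ⬝ᵥ S a')
    (hSL : ∀ a b, 2 ∣ S a ⬝ᵥ L b) :
    Pairwise fun j j' ↦ 2 ∣ Sum.elim L S j ⬝ᵥ Sum.elim L S j' := by
  rintro (b | a) (b' | a') hne
  · exact hL (ne_of_apply_ne Sum.inl hne)
  · exact dotProduct_comm (S a') (L b) ▸ hSL a' b
  · exact hSL a b'
  · exact hS (ne_of_apply_ne Sum.inr hne)

theorem stmt_7_general {ι ι' κ : Type*} [Finite ι] [Finite ι'] [DecidableEq ι] [Fintype κ]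
    (S : ι' → κ → ℤ) (L : ι → κ → ℤ)
    (hS01 : ∀ a i, S a i = 0 ∨ S a i = 1)
    (hL01 : ∀ b i, L b i = 0 ∨ L b i = 1)
    (hSS : ∀ a b, (2 : ℤ) ∣ ∑ i, S a i * S b i)
    (hSL : ∀ a b, (2 : ℤ) ∣ ∑ i, S a i * L b i)
    (hLL : ∀ b b', (2 : ℤ) ∣ ((∑ i, L b i * L b' i) - if b = b' then 1 else 0)) :
    ∃ t : κ → ℤ,
      (∀ i, Odd (t i)) ∧
      (∀ a, (4 : ℤ) ∣ ∑ i, S a i * t i) ∧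
      (∀ b, (4 : ℤ) ∣ ((∑ i, L b i * t i) - 1)) ∧
      NuOrthoRows 2 t (Sum.elim L S) ∧
      (NuOrthoRows 2 t L ∧ ∀ b, (2 ^ 2 : ℤ) ∣ ((∑ i, L b i * t i) - 1)) ∧
      (NuOrthoRows 2 t S ∧ ∀ a, (2 ^ 2 : ℤ) ∣ ∑ i, S a i * t i) := by
  have hS : Pairwise fun a a' ↦ 2 ∣ S a ⬝ᵥ S a' := fun a a' _ ↦ hSS a a'
  have hL : Pairwise fun b b' ↦ 2 ∣ L b ⬝ᵥ L b' := fun b b' hne ↦ by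
    simpa only [if_neg hne, sub_zero, dotProduct] using hLL b b'
  have hG := pairwise_two_dvd_sumElim_dotProduct hL hS hSL
  obtain ⟨t, ht, hnorm⟩ :=
    exists_odd_dotProduct_modEq_emod_two hG <| Sum.forall.2 ⟨hL01, hS01⟩
  have hS4 (a : ι') : (4 : ℤ) ∣ S a ⬝ᵥ t := by
    have heven : (S a ⬝ᵥ S a) % 2 = 0 := Int.emod_eq_zero_of_dvd (hSS a a)
    exact Int.modEq_zero_iff_dvd.1 (heven ▸ hnorm (Sum.inr a))
  have hL4 (b : ι) : (4 : ℤ) ∣ L b ⬝ᵥ t - 1 := by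
    have hodd : (L b ⬝ᵥ L b) % 2 = 1 := by
      have hLb : 2 ∣ L b ⬝ᵥ L b - 1 := by simpa only [if_true, dotProduct] using hLL b b
      lia
    exact (hodd ▸ hnorm (Sum.inl b)).symm.dvd
  exact ⟨t, ht, hS4, hL4, nuOrthoRows_two_of_odd hG ht, ⟨nuOrthoRows_two_of_odd hL ht, hL4⟩,
    ⟨nuOrthoRows_two_of_odd hS ht, hS4⟩⟩

/-- Let `S` (r×n) and `L` (k×n) be binary matrices whose stacked rows
`G = [L; S]` are `𝔽₂`-linearly independent, with `S Sᵀ = 0`, `S Lᵀ = 0`, `L Lᵀ = I`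
over `𝔽₂`. Then there is a coefficient vector `t` (all entries odd) with
`Σᵢ S_{ai} tᵢ ≡ 0 (mod 4)` and `Σᵢ L_{bi} tᵢ ≡ 1 (mod 4)`; consequently the rows of
`G` are `(2,t)`-orthogonal, those of `L` are `(2,t)`-orthonormal, and those of `S`
are `(2,t)`-null. -/
theorem stmt_7 (n r k : ℕ)
    (S : Fin r → Fin n → ℤ) (L : Fin k → Fin n → ℤ)
    (hS01 : ∀ a i, S a i = 0 ∨ S a i = 1)
    (hL01 : ∀ b i, L b i = 0 ∨ L b i = 1)
    (hind : RowsLinIndepF2 (Sum.elim L S))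
    (hSS : ∀ a b, (2 : ℤ) ∣ ∑ i, S a i * S b i)
    (hSL : ∀ a b, (2 : ℤ) ∣ ∑ i, S a i * L b i)
    (hLL : ∀ b b', (2 : ℤ) ∣ ((∑ i, L b i * L b' i) - if b = b' then 1 else 0)) :
    ∃ t : Fin n → ℤ,
      (∀ i, Odd (t i)) ∧
      (∀ a, (4 : ℤ) ∣ ∑ i, S a i * t i) ∧
      (∀ b, (4 : ℤ) ∣ ((∑ i, L b i * t i) - 1)) ∧
      NuOrthoRows 2 t (Sum.elim L S) ∧
      (NuOrthoRows 2 t L ∧ ∀ b, (2 ^ 2 : ℤ) ∣ ((∑ i, L b i * t i) - 1)) ∧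
      (NuOrthoRows 2 t S ∧ ∀ a, (2 ^ 2 : ℤ) ∣ ∑ i, S a i * t i) :=
  stmt_7_general S L hS01 hL01 hSS hSL hLL
end

section
/- Let t be a coefficient vector of length n and let G be a binary matrix with n columns whose rows form a (3,t)-orthogonal set. Then G is triorthogonal: for any two distinct rows a ≠ b, Σᵢ G_{ai} G_{bi} ≡ 0 (mod 2), and for any three pairwise distinct rows a, b, c, Σᵢ G_{ai} G_{bi} G_{ci} ≡ 0 (mod 2). -/
/-!
For bits `y, z` one has `2yz = y + z - (y ⊕ z)`. Hence if `x` is orthogonal modulo `2^(k+1)` to `y`,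
`z` and `y ⊕ z` for the weights `tᵢ`, then `x` is orthogonal to `y` modulo `2^k` for the weights
`zᵢ tᵢ`. Among at most `ν` rows of a `(ν,t)`-orthogonal set keep two as vectors and move the
remaining ones, at most `ν - 2`, into the weights: each move costs one factor of the modulus
`2^(ν-1)`, so a factor `2` survives. Modulo `2` the odd weights `tᵢ` are invisible.
-/

open Finset

variable {ι κ : Type*}

theorem modTwoSum_singleton (A : ι → κ → ℤ) (c : ι) : modTwoSum A {c} = fun i => A c i % 2 := by
  ext
  simp [modTwoSum]

theorem modTwoSum_insert [DecidableEq ι] {A : ι → κ → ℤ} {K : Finset ι} {c : ι} (hc : c ∉ K) :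
    modTwoSum A (insert c K) = fun i => ((∑ r ∈ K, A r i) + A c i) % 2 := by
  ext
  simp only [modTwoSum, sum_insert hc, add_comm]

theorem two_mul_emod_two_mul_emod_two (a b : ℤ) :
    2 * (a % 2 * (b % 2)) = a % 2 + b % 2 - (a + b) % 2 := by
  rcases Int.emod_two_eq_zero_or_one a with ha | ha <;>
    rcases Int.emod_two_eq_zero_or_one b with hb | hb <;>
    simp [Int.add_emod, ha, hb]

variable [Fintype κ] {ν : ℕ} {t : κ → ℤ}

theorem NuOrthoVec.emod_two_mul_weight {x y z : κ → ℤ}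
    (hy : NuOrthoVec (ν + 1) t x (fun i => y i % 2))
    (hz : NuOrthoVec (ν + 1) t x (fun i => z i % 2))
    (hyz : NuOrthoVec (ν + 1) t x (fun i => (y i + z i) % 2)) :
    NuOrthoVec ν (fun i => z i % 2 * t i) x (fun i => y i % 2) := by
  cases ν with
  | zero =>
    -- Truncated subtraction makes the modulus `2 ^ (0 - 1)` equal to `1`.
    exact one_dvd _
  | succ k =>
    have double_sum : 2 * ∑ i, x i * (y i % 2) * (z i % 2 * t i) =
        ∑ i, x i * (y i % 2) * t i + ∑ i, x i * (z i % 2) * t i -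
          ∑ i, x i * ((y i + z i) % 2) * t i := by
      rw [mul_sum, ← sum_add_distrib, ← sum_sub_distrib]
      refine sum_congr rfl fun i _ => ?_
      linear_combination x i * t i * two_mul_emod_two_mul_emod_two (y i) (z i)
    refine Int.dvd_of_mul_dvd_mul_left two_ne_zero ?_
    rw [double_sum, Nat.add_sub_cancel, ← pow_succ']
    exact dvd_sub (dvd_add hy hz) hyz

theorem NuOrthoRows.nuOrthoVec_prod_mul_weight {A : ι → κ → ℤ} {K K' T : Finset ι}
    (hA : NuOrthoRows (ν + #T) t A) (hKK' : Disjoint K K') (hKT : Disjoint K T)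
    (hK'T : Disjoint K' T) :
    NuOrthoVec ν (fun i => (∏ r ∈ T, (A r i % 2)) * t i) (modTwoSum A K) (modTwoSum A K') := by
  classical
  induction T using Finset.induction_on generalizing ν K' with
  | empty => simpa using hA K K' hKK'
  | insert c T hc ih =>
    rw [disjoint_insert_right] at hKT hK'T
    have hA' : NuOrthoRows (ν + 1 + #T) t A := by
      rwa [card_insert_of_notMem hc, ← add_assoc, add_right_comm] at hA
    have hK' := ih hA' hKK' hKT.2 hK'T.2
    have hrow := ih hA' (disjoint_singleton_right.2 hKT.1) hKT.2 (disjoint_singleton_left.2 hc)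
    have hinsert := ih hA' (disjoint_insert_right.2 ⟨hKT.1, hKK'⟩) hKT.2
      (disjoint_insert_left.2 ⟨hc, hK'T.2⟩)
    rw [modTwoSum_singleton] at hrow
    rw [modTwoSum_insert hK'T.1] at hinsert
    simp only [prod_insert hc, mul_assoc]
    exact hK'.emod_two_mul_weight hrow hinsert

theorem stmt_14_general (ht : ∀ i, Odd (t i)) {A : ι → κ → ℤ} (hA : NuOrthoRows ν t A)
    {S : Finset ι} (hS : 1 < #S) (hSν : #S ≤ ν) : 2 ∣ ∑ i, ∏ r ∈ S, A r i := by
  classical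
  obtain ⟨a, ha, b, hb, hab⟩ := one_lt_card.1 hS
  have hbS : b ∈ S.erase a := mem_erase.2 ⟨hab.symm, hb⟩
  set T := (S.erase a).erase b with hT
  have hcard : #T + 2 = #S := by
    rw [← card_erase_add_one ha, ← card_erase_add_one hbS]
  obtain ⟨k, rfl⟩ : ∃ k, ν = k + 2 + #T := ⟨ν - #S, by omega⟩
  have horth : NuOrthoVec (k + 2) (fun i => (∏ r ∈ T, (A r i % 2)) * t i)
      (modTwoSum A {a}) (modTwoSum A {b}) :=
    hA.nuOrthoVec_prod_mul_weight (by simpa using hab) (by simp [hT]) (by simp [hT])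
  have heven : (2 : ℤ) ∣ ∑ i, A a i % 2 * (A b i % 2) * ((∏ r ∈ T, (A r i % 2)) * t i) := by
    simpa only [modTwoSum_singleton] using (dvd_pow_self 2 k.succ_ne_zero).trans horth
  have odd_modEq_one (i : κ) : t i ≡ 1 [ZMOD 2] := Int.odd_iff.1 (ht i)
  refine (Int.ModEq.dvd_iff (Int.ModEq.sum fun i _ => ?_)).1 heven
  calc A a i % 2 * (A b i % 2) * ((∏ r ∈ T, (A r i % 2)) * t i)
      ≡ A a i * A b i * ((∏ r ∈ T, A r i) * 1) [ZMOD 2] :=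
        ((Int.mod_modEq _ _).mul (Int.mod_modEq _ _)).mul
          ((Int.ModEq.prod fun r _ => Int.mod_modEq _ _).mul (odd_modEq_one i))
    _ = ∏ r ∈ S, A r i := by
        rw [mul_one, mul_assoc, mul_prod_erase _ (A · i) hbS, mul_prod_erase _ (A · i) ha]

/-- If the rows of a binary matrix `G` form a `(3,t)`-orthogonal set for
some coefficient vector `t` (all entries odd), then `G` is triorthogonal: any two
distinct rows have even overlap, and any three pairwise distinct rows have even
overlap. -/
theorem stmt_14 (n m : ℕ)
    (t : Fin n → ℤ) (ht : ∀ i, Odd (t i))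
    (G : Fin m → Fin n → ℤ) (hG01 : ∀ a i, G a i = 0 ∨ G a i = 1)
    (horth : NuOrthoRows 3 t G) :
    (∀ a b : Fin m, a ≠ b → (2 : ℤ) ∣ ∑ i, G a i * G b i) ∧
    (∀ a b c : Fin m, a ≠ b → a ≠ c → b ≠ c →
      (2 : ℤ) ∣ ∑ i, G a i * G b i * G c i) := by
  refine ⟨fun a b hab => ?_, fun a b c hab hac hbc => ?_⟩
  · simpa [hab] using stmt_14_general ht horth (S := {a, b}) (by simp [hab]) (by simp [hab])
  · simpa [hab, hac, hbc, mul_assoc] using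
      stmt_14_general ht horth (S := {a, b, c}) (by simp [hab, hac, hbc]) (by simp [hab, hac, hbc])
end

section
/- Let k ≥ 2 be an even integer and consider the (k+3) × (3k+8) binary matrix G whose columns are grouped into five blocks of sizes 4, 4, k, k, k, with rows: for j = 1,…,k, the row L_j = (0 0 0 0 | 1 1 1 1 | e_j | e_j | e_j) where e_j is the j-th standard basis vector of length k; and three further rows S_1 = (0 0 1 1 | 0 0 1 1 | 1⃗ | 0⃗ | 1⃗), S_2 = (1 0 1 0 | 1 0 1 0 | 0⃗ | 1⃗ | 1⃗), S_3 = (1 1 1 1 | 1 1 1 1 | 0⃗ | 0⃗ | 0⃗), where 1⃗ and 0⃗ are the all-ones and all-zeros vectors of length k. Then there exists a coefficient vector t ∈ ℤ^{3k+8} (all entries odd) such that the rows of G form a (3,t)-orthogonal set, the rows L_1,…,L_k are (3,t)-orthonormal, and the rows S_1, S_2, S_3 are (3,t)-null. -/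
open Finset

/-- Column index type for the `[[3k+8, k, 2]]` triorthogonal matrix: five blocks of
sizes `4, 4, k, k, k`. -/
abbrev Col15 (k : ℕ) := Fin 4 ⊕ Fin 4 ⊕ Fin k ⊕ Fin k ⊕ Fin k

/-- The `j`-th standard basis vector of length `k` (as a `{0,1}` integer vector). -/
def eVec (k : ℕ) (j : Fin k) : Fin k → ℤ := fun i => if i = j then 1 else 0

/-- Row `L_j = (0 0 0 0 | 1 1 1 1 | e_j | e_j | e_j)`. -/
def Lrow15 (k : ℕ) (j : Fin k) : Col15 k → ℤ :=
  Sum.elim (fun _ => 0)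
    (Sum.elim (fun _ => 1)
      (Sum.elim (eVec k j) (Sum.elim (eVec k j) (eVec k j))))

/-- Row `S_1 = (0 0 1 1 | 0 0 1 1 | 1⃗ | 0⃗ | 1⃗)`. -/
def S1row (k : ℕ) : Col15 k → ℤ :=
  Sum.elim (fun i => if 2 ≤ i.val then 1 else 0)
    (Sum.elim (fun i => if 2 ≤ i.val then 1 else 0)
      (Sum.elim (fun _ => 1) (Sum.elim (fun _ => 0) (fun _ => 1))))

/-- Row `S_2 = (1 0 1 0 | 1 0 1 0 | 0⃗ | 1⃗ | 1⃗)`. -/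
def S2row (k : ℕ) : Col15 k → ℤ :=
  Sum.elim (fun i => if i.val % 2 = 0 then 1 else 0)
    (Sum.elim (fun i => if i.val % 2 = 0 then 1 else 0)
      (Sum.elim (fun _ => 0) (Sum.elim (fun _ => 1) (fun _ => 1))))

/-- Row `S_3 = (1 1 1 1 | 1 1 1 1 | 0⃗ | 0⃗ | 0⃗)`. -/
def S3row (k : ℕ) : Col15 k → ℤ :=
  Sum.elim (fun _ => 1) (Sum.elim (fun _ => 1) (fun _ => 0))


/-!
For bits `x r` one has `1 - 2 * ((∑ r ∈ K, x r) % 2) = ∏ r ∈ K, (1 - 2 * x r)`. Expanding the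
product, the mod-2 sum of the rows in `K` is the sum over nonempty `S ⊆ K` of `(-2) ^ (#S - 1)`
times the entrywise product of the rows in `S`. Hence a binary matrix has `(ν,t)`-orthogonal rows as
soon as, for every `m ≥ 2`, the `t`-weighted overlap of any `m` distinct rows is divisible by
`2 ^ (ν + 1 - m)`; for `ν = 3` this means pairs modulo `4` and triples modulo `2`.

For the matrix `G`, read the four columns of each of the first two blocks as the points of `𝔽₂²`.
The rows restrict there to affine functions `𝔽₂² → {0,1}`, each equal to `0`, `1` or a coordinate up
to complement, and the signs `(1, -1, -1, 1)` annihilate all of these. Only products involving both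
`S_1` and `S_2` survive; the block scalings make their pairwise overlap vanish, and leave `-2` for
`L_j`, `S_1`, `S_2` and `k` for `S_1`, `S_2`, `S_3` as the only nonzero triple overlaps.
-/

section Overlap

variable {κ : Type*} [Fintype κ]

/-- The overlap of two binary vectors weighted by `t`, as an integer: the quantity that
`NuOrthoVec` requires to be divisible by `2 ^ (ν - 1)`. -/
def pairOverlap (t v w : κ → ℤ) : ℤ := ∑ c, v c * w c * t c

/-- The common overlap of three binary vectors weighted by `t`, whose parity controls
`(3,t)`-orthogonality beyond pairs. -/
def tripleOverlap (t u v w : κ → ℤ) : ℤ := ∑ c, u c * v c * w c * t c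

variable (t u v w : κ → ℤ)

lemma pairOverlap_comm : pairOverlap t v w = pairOverlap t w v := by
  simp only [pairOverlap, mul_comm (v _)]

lemma tripleOverlap_eq_pairOverlap_mul :
    tripleOverlap t u v w = pairOverlap t u (v * w) := by
  simp only [tripleOverlap, pairOverlap, Pi.mul_apply, mul_assoc]

lemma tripleOverlap_right_comm : tripleOverlap t u v w = tripleOverlap t u w v := by
  rw [tripleOverlap_eq_pairOverlap_mul, tripleOverlap_eq_pairOverlap_mul, mul_comm]

lemma tripleOverlap_left_comm : tripleOverlap t u v w = tripleOverlap t v u w := by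
  simp only [tripleOverlap, mul_comm (u _)]

lemma tripleOverlap_rotate : tripleOverlap t u v w = tripleOverlap t v w u := by
  rw [tripleOverlap_left_comm, tripleOverlap_right_comm]

end Overlap

section ModTwoSum

variable {ι κ : Type*} {A : ι → κ → ℤ}

lemma one_sub_two_mul_modTwoSum (hA : ∀ r c, A r c = 0 ∨ A r c = 1) (K : Finset ι) (c : κ) :
    1 - 2 * modTwoSum A K c = ∏ r ∈ K, (1 - 2 * A r c) := by
  classical
  simp only [modTwoSum]
  induction K using Finset.induction_on with
  | empty => simp
  | insert r K hr ih =>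
    rw [sum_insert hr, prod_insert hr, ← ih]
    rcases hA r c with h | h <;> rw [h] <;> grind

lemma modTwoSum_eq_sum_powerset [DecidableEq ι] (hA : ∀ r c, A r c = 0 ∨ A r c = 1)
    (K : Finset ι) (c : κ) :
    modTwoSum A K c = ∑ S ∈ K.powerset.erase ∅, (-2) ^ (#S - 1) * ∏ r ∈ S, A r c := by
  have expansion : 1 - 2 * modTwoSum A K c =
      1 + ∑ S ∈ K.powerset.erase ∅, (-2) ^ #S * ∏ r ∈ S, A r c := by
    rw [one_sub_two_mul_modTwoSum hA, sum_erase_eq_sub (empty_mem_powerset K)]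
    simp [pow_card_mul_prod, sub_eq_add_neg, prod_one_add]
  have factor_neg_two : ∑ S ∈ K.powerset.erase ∅, (-2) ^ #S * ∏ r ∈ S, A r c =
      -2 * ∑ S ∈ K.powerset.erase ∅, (-2) ^ (#S - 1) * ∏ r ∈ S, A r c := by
    rw [mul_sum]
    refine sum_congr rfl fun S hS => ?_
    have hS_card : #S ≠ 0 := card_ne_zero.mpr (nonempty_iff_ne_empty.mpr (ne_of_mem_erase hS))
    rw [← mul_assoc, mul_pow_sub_one hS_card]
  linarith

variable [Fintype κ] {t : κ → ℤ}

-- The subtraction `ν + 1 - #S` truncates: nothing is required of sets `S` with `#S > ν`.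
lemma nuOrthoRows_of_two_pow_dvd_sum_prod {ν : ℕ} (hA : ∀ r c, A r c = 0 ∨ A r c = 1)
    (h : ∀ S : Finset ι, 2 ≤ #S → (2 ^ (ν + 1 - #S) : ℤ) ∣ ∑ c, (∏ r ∈ S, A r c) * t c) :
    NuOrthoRows ν t A := by
  classical
  intro K K' hKK'
  have expansion : ∑ c, modTwoSum A K c * modTwoSum A K' c * t c =
      ∑ S ∈ K.powerset.erase ∅, ∑ S' ∈ K'.powerset.erase ∅,
        (-2) ^ (#S - 1 + (#S' - 1)) * ∑ c, (∏ r ∈ S, A r c) * (∏ r ∈ S', A r c) * t c := by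
    simp only [modTwoSum_eq_sum_powerset hA, sum_mul_sum]
    simp only [sum_mul, mul_sum]
    rw [sum_comm]
    refine sum_congr rfl fun S _ => ?_
    rw [sum_comm]
    refine sum_congr rfl fun S' _ => sum_congr rfl fun c _ => ?_
    ring
  rw [NuOrthoVec, expansion]
  refine dvd_sum fun S hS => dvd_sum fun S' hS' => ?_
  rw [mem_erase, mem_powerset, ← nonempty_iff_ne_empty, ← card_pos] at hS hS'
  have hSS' : Disjoint S S' := hKK'.mono hS.2 hS'.2
  have dvd_union := h (S ∪ S') (by rw [card_union_of_disjoint hSS']; omega)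
  simp only [card_union_of_disjoint hSS', prod_union hSS'] at dvd_union
  calc (2 ^ (ν - 1) : ℤ)
      ∣ 2 ^ (#S - 1 + (#S' - 1) + (ν + 1 - (#S + #S'))) := pow_dvd_pow 2 (by omega)
    _ = 2 ^ (#S - 1 + (#S' - 1)) * 2 ^ (ν + 1 - (#S + #S')) := pow_add ..
    _ ∣ _ := mul_dvd_mul (pow_dvd_pow_of_dvd (by norm_num) _) dvd_union

lemma nuOrthoRows_three_of_dvd_overlaps (hA : ∀ r c, A r c = 0 ∨ A r c = 1)
    (pairs : ∀ p q, p ≠ q → 4 ∣ pairOverlap t (A p) (A q))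
    (triples : ∀ p q r, p ≠ q → p ≠ r → q ≠ r → 2 ∣ tripleOverlap t (A p) (A q) (A r)) :
    NuOrthoRows 3 t A := by
  classical
  refine nuOrthoRows_of_two_pow_dvd_sum_prod hA fun S hS => ?_
  obtain hS | hS | hS : #S = 2 ∨ #S = 3 ∨ 3 + 1 - #S = 0 := by omega
  · obtain ⟨p, q, hpq, rfl⟩ := card_eq_two.mp hS
    simpa [pairOverlap, hS, prod_pair hpq] using pairs p q hpq
  · obtain ⟨p, q, r, hpq, hpr, hqr, rfl⟩ := card_eq_three.mp hS
    simpa [tripleOverlap, hS, hpq, hpr, hqr, mul_assoc] using triples p q r hpq hpr hqr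
  · simp [hS]

end ModTwoSum

section Matrix15

variable {k : ℕ}

/-- The generator matrix `G`, with rows `L_1, …, L_k` followed by `S_1, S_2, S_3`. -/
abbrev rows15 (k : ℕ) : Fin k ⊕ Fin 3 → Col15 k → ℤ :=
  Sum.elim (Lrow15 k) ![S1row k, S2row k, S3row k]

/-- The coefficient vector `t` witnessing the theorem. On the first two blocks it is a multiple of
`(1, -1, -1, 1)`. The overlap of `S_1` and `S_2` picks up `-1` from the second block and `-k` from
the fifth, which the factor `-(k + 1)` on the first block compensates. -/
def coeff15 (k : ℕ) : Col15 k → ℤ :=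
  Sum.elim ![-(k + 1), k + 1, k + 1, -(k + 1)]
    (Sum.elim ![1, -1, -1, 1] (Sum.elim (fun _ => 1) (Sum.elim (fun _ => 1) (fun _ => -1))))

lemma odd_coeff15 (hk : Even k) (c : Col15 k) : Odd (coeff15 k c) := by
  have odd_succ : Odd (k + 1 : ℤ) := mod_cast hk.add_one
  rcases c with i | i | i | i | i
  · fin_cases i <;> simp [coeff15, odd_succ, -neg_add_rev]
  · fin_cases i <;> simp [coeff15]
  all_goals simp [coeff15]

lemma sum_mul_coeff15 (f : Col15 k → ℤ) :
    ∑ c, f c * coeff15 k c =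
      (k + 1) * (f (.inl 1) + f (.inl 2) - f (.inl 0) - f (.inl 3)) +
      (f (.inr (.inl 0)) + f (.inr (.inl 3)) - f (.inr (.inl 1)) - f (.inr (.inl 2))) +
      ∑ j, (f (.inr (.inr (.inl j))) + f (.inr (.inr (.inr (.inl j)))) -
        f (.inr (.inr (.inr (.inr j))))) := by
  simp only [Fintype.sum_sum_type, Fin.sum_univ_four, coeff15, sum_sub_distrib, sum_add_distrib,
    Sum.elim_inl, Sum.elim_inr, Matrix.cons_val, mul_one, mul_neg, sum_neg_distrib]
  ring

lemma sum_Lrow15_mul_coeff15 (j : Fin k) : ∑ c, Lrow15 k j c * coeff15 k c = 1 := by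
  rw [sum_mul_coeff15]
  simp [Lrow15, eVec]

lemma sum_Srow15_mul_coeff15 (s : Fin 3) :
    ∑ c, ![S1row k, S2row k, S3row k] s c * coeff15 k c = 0 := by
  rw [sum_mul_coeff15]
  fin_cases s <;> simp [S1row, S2row, S3row]

lemma rows15_eq_zero_or_one (p : Fin k ⊕ Fin 3) (c : Col15 k) :
    rows15 k p c = 0 ∨ rows15 k p c = 1 := by
  rcases p with j | s
  · rcases c with i | i | i | i | i <;> simp [Lrow15, eVec] <;> omega
  · rcases c with i | i | i | i | i <;> fin_cases s <;> simp [S1row, S2row, S3row] <;> omega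

lemma rows15_secondBlock_alternatingSum (p : Fin k ⊕ Fin 3) :
    rows15 k p (.inr (.inl 0)) + rows15 k p (.inr (.inl 3)) -
      rows15 k p (.inr (.inl 1)) - rows15 k p (.inr (.inl 2)) = 0 := by
  rcases p with j | s
  · simp [Lrow15]
  · fin_cases s <;> simp [S1row, S2row, S3row]

lemma rows15_thirdBlock_add_fourthBlock {p : Fin k ⊕ Fin 3} {j : Fin k} (hp : p ≠ .inl j) :
    rows15 k p (.inr (.inr (.inl j))) + rows15 k p (.inr (.inr (.inr (.inl j)))) =
      rows15 k p (.inr (.inr (.inr (.inr j)))) := by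
  rcases p with i | s
  · have hij : j ≠ i := by grind
    simp [Lrow15, eVec, hij]
  · fin_cases s <;> simp [S1row, S2row, S3row]

lemma pairOverlap_Lrow15 (j : Fin k) (f : Col15 k → ℤ) :
    pairOverlap (coeff15 k) (Lrow15 k j) f =
      (f (.inr (.inl 0)) + f (.inr (.inl 3)) - f (.inr (.inl 1)) - f (.inr (.inl 2))) +
      (f (.inr (.inr (.inl j))) + f (.inr (.inr (.inr (.inl j)))) -
        f (.inr (.inr (.inr (.inr j))))) := by
  rw [pairOverlap, sum_mul_coeff15]
  simp [Lrow15, eVec, sum_sub_distrib, sum_add_distrib]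

lemma pairOverlap_Lrow15_rows15 {i : Fin k} {p : Fin k ⊕ Fin 3} (hp : p ≠ .inl i) :
    pairOverlap (coeff15 k) (Lrow15 k i) (rows15 k p) = 0 := by
  rw [pairOverlap_Lrow15, rows15_secondBlock_alternatingSum,
    rows15_thirdBlock_add_fourthBlock hp, sub_self, add_zero]

lemma pairOverlap_Srow15_Srow15 {a b : Fin 3} (hab : a ≠ b) :
    pairOverlap (coeff15 k) (rows15 k (.inr a)) (rows15 k (.inr b)) = 0 := by
  rw [pairOverlap, sum_mul_coeff15]
  fin_cases a <;> fin_cases b <;> simp [S1row, S2row, S3row] at hab ⊢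

lemma pairOverlap_rows15 {p q : Fin k ⊕ Fin 3} (hpq : p ≠ q) :
    pairOverlap (coeff15 k) (rows15 k p) (rows15 k q) = 0 := by
  rcases p with i | a
  · exact pairOverlap_Lrow15_rows15 hpq.symm
  · rcases q with j | b
    · rw [pairOverlap_comm]
      exact pairOverlap_Lrow15_rows15 hpq
    · exact pairOverlap_Srow15_Srow15 (ne_of_apply_ne _ hpq)

lemma tripleOverlap_Lrow15_Lrow15 {i j : Fin k} (hij : i ≠ j) (p : Fin k ⊕ Fin 3) :
    tripleOverlap (coeff15 k) (Lrow15 k i) (Lrow15 k j) (rows15 k p) = 0 := by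
  rw [tripleOverlap_eq_pairOverlap_mul, pairOverlap_Lrow15]
  simpa [Lrow15, eVec, hij] using rows15_secondBlock_alternatingSum p

lemma even_tripleOverlap_Lrow15_Srow15_Srow15 (i : Fin k) {a b : Fin 3} (hab : a ≠ b) :
    Even (tripleOverlap (coeff15 k) (Lrow15 k i) (rows15 k (.inr a)) (rows15 k (.inr b))) := by
  rw [tripleOverlap_eq_pairOverlap_mul, pairOverlap_Lrow15]
  fin_cases a <;> fin_cases b <;> simp [S1row, S2row, S3row] at hab ⊢

lemma tripleOverlap_Srow15_Srow15_Srow15 {a b d : Fin 3} (hab : a ≠ b) (had : a ≠ d)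
    (hbd : b ≠ d) :
    tripleOverlap (coeff15 k) (rows15 k (.inr a)) (rows15 k (.inr b)) (rows15 k (.inr d)) = k := by
  rw [tripleOverlap, sum_mul_coeff15]
  fin_cases a <;> fin_cases b <;> fin_cases d <;> simp [S1row, S2row, S3row] at hab had hbd ⊢

lemma even_tripleOverlap_rows15 (hk : Even k) {p q r : Fin k ⊕ Fin 3}
    (hpq : p ≠ q) (hpr : p ≠ r) (hqr : q ≠ r) :
    Even (tripleOverlap (coeff15 k) (rows15 k p) (rows15 k q) (rows15 k r)) := by
  have even_LL {i j : Fin k} (hij : Sum.inl i ≠ (Sum.inl j : Fin k ⊕ Fin 3))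
      (s : Fin k ⊕ Fin 3) :
      Even (tripleOverlap (coeff15 k) (Lrow15 k i) (Lrow15 k j) (rows15 k s)) := by
    rw [tripleOverlap_Lrow15_Lrow15 (ne_of_apply_ne _ hij)]
    exact Even.zero
  have even_LSS (i : Fin k) {a b : Fin 3} (hab : Sum.inr a ≠ (Sum.inr b : Fin k ⊕ Fin 3)) :=
    even_tripleOverlap_Lrow15_Srow15_Srow15 i (ne_of_apply_ne _ hab)
  rcases p with i | a <;> rcases q with j | b <;> rcases r with l | d
  · exact even_LL hpq _
  · exact even_LL hpq _
  · rw [tripleOverlap_right_comm]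
    exact even_LL hpr _
  · exact even_LSS i hqr
  · rw [tripleOverlap_rotate]
    exact even_LL hqr _
  · rw [tripleOverlap_left_comm]
    exact even_LSS j hpr
  · rw [← tripleOverlap_rotate]
    exact even_LSS l hpq
  · rw [tripleOverlap_Srow15_Srow15_Srow15 (ne_of_apply_ne _ hpq) (ne_of_apply_ne _ hpr)
      (ne_of_apply_ne _ hqr)]
    exact mod_cast hk

lemma nuOrthoRows_rows15 (hk : Even k) : NuOrthoRows 3 (coeff15 k) (rows15 k) := by
  refine nuOrthoRows_three_of_dvd_overlaps rows15_eq_zero_or_one (fun p q hpq => ?_)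
    fun p q r hpq hpr hqr => ?_
  · rw [pairOverlap_rows15 hpq]
    exact dvd_zero 4
  · exact (even_tripleOverlap_rows15 hk hpq hpr hqr).two_dvd

end Matrix15

/-- For every even `k ≥ 2`, the `(k+3) × (3k+8)` binary matrix `G` with
rows `L_1, …, L_k, S_1, S_2, S_3` as above admits a coefficient vector `t` (all
entries odd) making the rows of `G` a `(3,t)`-orthogonal set, the rows `L_j`
`(3,t)`-orthonormal, and the rows `S_1, S_2, S_3` `(3,t)`-null. -/
theorem stmt_15 (k : ℕ) (hk : 2 ≤ k) (hke : Even k) :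
    ∃ t : Col15 k → ℤ,
      (∀ c, Odd (t c)) ∧
      NuOrthoRows 3 t (Sum.elim (Lrow15 k) ![S1row k, S2row k, S3row k]) ∧
      (∀ j : Fin k, (2 ^ 3 : ℤ) ∣ ((∑ c, Lrow15 k j c * t c) - 1)) ∧
      (∀ s : Fin 3, (2 ^ 3 : ℤ) ∣ ∑ c, (![S1row k, S2row k, S3row k]) s c * t c) := by
  refine ⟨coeff15 k, odd_coeff15 hke, nuOrthoRows_rows15 hke, fun j => ?_, fun s => ?_⟩
  · rw [sum_Lrow15_mul_coeff15, sub_self]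
    exact dvd_zero _
  · rw [sum_Srow15_mul_coeff15]
    exact dvd_zero _
end
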